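/- Let γ > 0, let M ∈ ℝ_{≥0}^{n×s}, and let p ∈ Σ_n have strictly positive entries. Then the function q ↦ W_γ(p,q) is differentiable (in the sense of the relative differential along the affine hull of Σ_s) at every q in the relative interior of Σ_s, i.e. at every q ∈ Σ_s with strictly positive entries. -/

import Mathlib

open Finset

noncomputable section

/-- The simplex Σ_n: nonnegative vectors in ℝ^n summing to 1. -/
def simplex (n : ℕ) : Set (Fin n → ℝ) :=
  {p | (∀ i, 0 ≤ p i) ∧ ∑ i, p i = 1}

/-- The transport polytope U(p,q): nonnegative n×s matrices with row sums p
and column sums q. -/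
def transportPolytope {n s : ℕ} (p : Fin n → ℝ) (q : Fin s → ℝ) :
    Set (Matrix (Fin n) (Fin s) ℝ) :=
  {T | (∀ i j, 0 ≤ T i j) ∧ (∀ i, ∑ j, T i j = p i) ∧ (∀ j, ∑ i, T i j = q j)}

/-- Frobenius inner product ⟨T,M⟩ = Σ_{i,j} T_{ij} M_{ij}. -/
def frob {n s : ℕ} (T M : Matrix (Fin n) (Fin s) ℝ) : ℝ :=
  ∑ i, ∑ j, T i j * M i j

/-- The entropy h(T) = −Σ_{i,j} T_{ij} log T_{ij} (Real.log 0 = 0, so 0 log 0 = 0). -/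
def entropy {n s : ℕ} (T : Matrix (Fin n) (Fin s) ℝ) : ℝ :=
  -∑ i, ∑ j, T i j * Real.log (T i j)

/-- The Wasserstein distance W(p,q) = inf_{T ∈ U(p,q)} ⟨T,M⟩. -/
def W {n s : ℕ} (M : Matrix (Fin n) (Fin s) ℝ) (p : Fin n → ℝ) (q : Fin s → ℝ) : ℝ :=
  sInf ((fun T => frob T M) '' transportPolytope p q)

/-- The smoothed Wasserstein distance W_γ(p,q) = inf_{T ∈ U(p,q)} ⟨T,M⟩ − γ h(T). -/
def Wsmooth {n s : ℕ} (γ : ℝ) (M : Matrix (Fin n) (Fin s) ℝ)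
    (p : Fin n → ℝ) (q : Fin s → ℝ) : ℝ :=
  sInf ((fun T => frob T M - γ * entropy T) '' transportPolytope p q)

/-- Entrywise cost. -/
def ec (γ m x : ℝ) : ℝ := x * m + γ * (x * Real.log x)

/-- Total cost. -/
def fc {n s : ℕ} (γ : ℝ) (M T : Matrix (Fin n) (Fin s) ℝ) : ℝ :=
  ∑ i, ∑ j, ec γ (M i j) (T i j)

lemma fc_eq {n s : ℕ} (γ : ℝ) (M T : Matrix (Fin n) (Fin s) ℝ) :
    frob T M - γ * entropy T = fc γ M T := by
  simp only [frob, entropy, fc, ec, Finset.sum_add_distrib, Finset.mul_sum, mul_neg, sub_neg_eq_add]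

lemma ec_convex {γ : ℝ} (hγ : 0 < γ) (m : ℝ) {x y a b : ℝ} (hx : 0 ≤ x) (hy : 0 ≤ y)
    (ha : 0 ≤ a) (hb : 0 ≤ b) (hab : a + b = 1) :
    ec γ m (a * x + b * y) ≤ a * ec γ m x + b * ec γ m y := by
  have h := Real.convexOn_mul_log.2 (Set.mem_Ici.2 hx) (Set.mem_Ici.2 hy) ha hb hab
  simp only [smul_eq_mul] at h
  unfold ec
  nlinarith [mul_le_mul_of_nonneg_left h hγ.le]

lemma continuous_fc {n s : ℕ} (γ : ℝ) (M : Matrix (Fin n) (Fin s) ℝ) :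
    Continuous (fc γ M) := by
  unfold fc ec
  refine continuous_finsetSum _ fun i _ => continuous_finsetSum _ fun j _ => ?_
  have h : Continuous fun T : Matrix (Fin n) (Fin s) ℝ => T i j := by fun_prop
  have h2 := Real.continuous_mul_log.comp h
  exact (h.mul continuous_const).add (continuous_const.mul h2)

lemma isCompact_tp {n s : ℕ} (p : Fin n → ℝ) (q : Fin s → ℝ) :
    IsCompact (transportPolytope p q) := by
  have hK : IsCompact (Set.pi Set.univ (fun i : Fin n =>
      Set.pi Set.univ (fun _ : Fin s => Set.Icc (0:ℝ) (p i)))) :=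
    isCompact_univ_pi fun i => isCompact_univ_pi fun _ => isCompact_Icc
  have hc : ∀ i j, Continuous fun T : Matrix (Fin n) (Fin s) ℝ => T i j := by
    intro i j; fun_prop
  refine IsCompact.of_isClosed_subset hK ?_ ?_
  · have : transportPolytope p q = (⋂ i, ⋂ j, {T | 0 ≤ T i j}) ∩
        ((⋂ i, {T | ∑ j, T i j = p i}) ∩ (⋂ j, {T | ∑ i, T i j = q j})) := by
      ext T; simp [transportPolytope]
    rw [this]
    refine IsClosed.inter (isClosed_iInter fun i => isClosed_iInter fun j =>
      isClosed_le continuous_const (hc i j)) (IsClosed.inter ?_ ?_)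
    · exact isClosed_iInter fun i => isClosed_eq
        (continuous_finsetSum _ fun j _ => hc i j) continuous_const
    · exact isClosed_iInter fun j => isClosed_eq
        (continuous_finsetSum _ fun i _ => hc i j) continuous_const
  · rintro T ⟨h0, h1, -⟩ i - j -
    refine ⟨h0 i j, ?_⟩
    rw [← h1 i]
    exact Finset.single_le_sum (f := fun j => T i j) (fun j _ => h0 i j) (Finset.mem_univ j)

lemma min_pos {n s : ℕ} {γ : ℝ} (hγ : 0 < γ) (M : Matrix (Fin n) (Fin s) ℝ)
    {p : Fin n → ℝ} (hp : ∑ i, p i = 1) (hp' : ∀ i, 0 < p i)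
    {q : Fin s → ℝ} (hq : ∑ i, q i = 1) (hq' : ∀ j, 0 < q j)
    {T : Matrix (Fin n) (Fin s) ℝ} (hT : T ∈ transportPolytope p q)
    (hmin : ∀ T' ∈ transportPolytope p q, fc γ M T ≤ fc γ M T') (i j) : 0 < T i j := by
  obtain ⟨h0, h1, h2⟩ := hT
  refine lt_of_le_of_ne (h0 i j) fun hz => ?_
  set P : Matrix (Fin n) (Fin s) ℝ := fun i j => p i * q j with hP
  have hPpos : ∀ i j, 0 < P i j := fun i j => mul_pos (hp' i) (hq' j)
  have hPmem : P ∈ transportPolytope p q := by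
    refine ⟨fun i j => (hPpos i j).le, fun i => ?_, fun j => ?_⟩
    · simp [hP, ← Finset.mul_sum, hq]
    · simp [hP, ← Finset.sum_mul, hp]
  have key : ∀ t : ℝ, 0 < t → t ≤ 1 →
      0 ≤ t * (fc γ M P - fc γ M T + γ * P i j * Real.log t) := by
    intro t ht ht1
    have hmem : (fun i j => (1 - t) * T i j + t * P i j : Matrix (Fin n) (Fin s) ℝ)
        ∈ transportPolytope p q := by
      refine ⟨fun i j => ?_, fun i => ?_, fun j => ?_⟩
      · exact add_nonneg (mul_nonneg (by linarith) (h0 i j)) (mul_nonneg ht.le (hPpos i j).le)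
      · simp only [Finset.sum_add_distrib, ← Finset.mul_sum, h1, hPmem.2.1]; ring
      · simp only [Finset.sum_add_distrib, ← Finset.mul_sum, h2, hPmem.2.2]; ring
    have hle := hmin _ hmem
    have hub : fc γ M (fun i j => (1 - t) * T i j + t * P i j) ≤
        ∑ i', ∑ j', ((1 - t) * ec γ (M i' j') (T i' j') + t * ec γ (M i' j') (P i' j')
          + if i' = i then (if j' = j then γ * t * P i j * Real.log t else 0) else 0) := by
      unfold fc
      refine Finset.sum_le_sum fun i' _ => Finset.sum_le_sum fun j' _ => ?_
      have hcv := ec_convex hγ (M i' j') (h0 i' j') (hPpos i' j').le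
        (by linarith : 0 ≤ 1 - t) ht.le (by ring)
      by_cases hi : i' = i
      · by_cases hj : j' = j
        · subst hi hj
          simp only [if_true, ← hz, ec, mul_zero, zero_add, zero_mul, add_zero]
          rw [Real.log_mul ht.ne' (hPpos i' j').ne']
          apply le_of_eq; ring
        · simpa [hi, hj] using (by simpa [hi] using hcv)
      · simpa [hi] using hcv
    have hsum : ∑ i', ∑ j', ((1 - t) * ec γ (M i' j') (T i' j') + t * ec γ (M i' j') (P i' j')
          + if i' = i then (if j' = j then γ * t * P i j * Real.log t else 0) else 0)
        = (1 - t) * fc γ M T + t * fc γ M P + γ * t * P i j * Real.log t := by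
      have : ∑ i', ∑ j', (if i' = i then (if j' = j then γ * t * P i j * Real.log t else 0) else 0)
          = γ * t * P i j * Real.log t := by
        rw [Finset.sum_eq_single i (by intro b _ hb; simp [hb]) (by simp)]
        simp
      simp only [Finset.sum_add_distrib, this, fc, Finset.mul_sum]
    rw [hsum] at hub
    nlinarith
  have hc : 0 < γ * P i j := mul_pos hγ (hPpos i j)
  have hd : fc γ M T ≤ fc γ M P := hmin P hPmem
  set d := fc γ M P - fc γ M T with hdd
  have hd0 : 0 ≤ d := by linarith
  have hk := key (Real.exp (-((d + 1) / (γ * P i j)))) (Real.exp_pos _)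
    (Real.exp_le_one_iff.2 (by have : 0 ≤ (d + 1) / (γ * P i j) := by positivity
                               linarith))
  have hk' := nonneg_of_mul_nonneg_right hk (Real.exp_pos _)
  rw [Real.log_exp, mul_neg, mul_div_cancel₀ _ hc.ne'] at hk'
  linarith

/-- for γ > 0 and p with positive entries, q ↦ W_γ(p,q) is differentiable
along the affine hull {x : Σ_j x_j = 1} of the simplex at every q in the relative
interior of Σ_s (i.e. q ∈ Σ_s with strictly positive entries). -/
theorem wassersteinSmooth_differentiableWithinAt
    (n s : ℕ) (hn : 0 < n) (hs : 0 < s)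
    (γ : ℝ) (hγ : 0 < γ)
    (M : Matrix (Fin n) (Fin s) ℝ) (hM : ∀ i j, 0 ≤ M i j)
    (p : Fin n → ℝ) (hp : p ∈ simplex n) (hp' : ∀ i, 0 < p i)
    (q : Fin s → ℝ) (hq : q ∈ simplex s) (hq' : ∀ j, 0 < q j) :
    DifferentiableWithinAt ℝ (fun q' => Wsmooth γ M p q')
      {x : Fin s → ℝ | ∑ j, x j = 1} q := by
  obtain ⟨hp0, hp1⟩ := hp
  obtain ⟨hq0, hq1⟩ := hq
  have hne : (transportPolytope p q).Nonempty := by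
    refine ⟨fun i j => p i * q j, fun i j => mul_nonneg (hp0 i) (hq0 j), fun i => ?_, fun j => ?_⟩
    · simp [← Finset.mul_sum, hq1]
    · simp [← Finset.sum_mul, hp1]
  obtain ⟨T, hT, hmin'⟩ := (isCompact_tp p q).exists_isMinOn hne (continuous_fc γ M).continuousOn
  have hmin : ∀ T' ∈ transportPolytope p q, fc γ M T ≤ fc γ M T' := fun T' h => hmin' h
  have hpos := min_pos hγ M hp1 hp' hq1 hq' hT hmin
  have hW : ∀ x, Wsmooth γ M p x = sInf (fc γ M '' transportPolytope p x) := by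
    intro x; unfold Wsmooth; simp only [fc_eq]
  -- the perturbed plan
  let R : (Fin s → ℝ) → Matrix (Fin n) (Fin s) ℝ := fun v i j => T i j + p i * v j
  let G : (Fin s → ℝ) → ℝ := fun v => fc γ M (R v)
  have hR0 : R 0 = T := by funext i j; simp [R]
  have hGd : DifferentiableAt ℝ G 0 := by
    simp only [G, fc, ec, R]
    refine DifferentiableAt.fun_sum fun i _ => DifferentiableAt.fun_sum fun j _ => ?_
    have h1 : DifferentiableAt ℝ (fun v : Fin s → ℝ => T i j + p i * v j) 0 := by fun_prop
    have h2 := h1.log (by simpa using (hpos i j).ne')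
    exact (h1.mul_const _).add ((h1.mul h2).const_mul γ)
  obtain ⟨L, hL⟩ := hGd
  have hRmem : ∀ v : Fin s → ℝ, ∑ j, v j = 0 → (∀ i j, 0 ≤ R v i j) →
      R v ∈ transportPolytope p (q + v) := by
    intro v hv h0
    refine ⟨h0, fun i => ?_, fun j => ?_⟩
    · simp only [R, Finset.sum_add_distrib, ← Finset.mul_sum, hv, hT.2.1]; ring
    · simp only [R, Finset.sum_add_distrib, ← Finset.sum_mul, hp1, hT.2.2, Pi.add_apply]; ring
  have bound : ∀ v : Fin s → ℝ, ∑ j, v j = 0 → (∀ i j, 0 ≤ R v i j) → (∀ i j, 0 ≤ R (-v) i j) →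
      Wsmooth γ M p (q + v) ≤ G v ∧ 2 * G 0 - G (-v) ≤ Wsmooth γ M p (q + v) := by
    intro v hv h1 h2
    have hlow : ∀ y ∈ fc γ M '' transportPolytope p (q + v), 2 * G 0 - G (-v) ≤ y := by
      rintro _ ⟨T1, hT1, rfl⟩
      have hT2 := hRmem (-v) (by simp [hv]) h2
      have hmid : (fun i j => (1/2) * T1 i j + (1/2) * R (-v) i j : Matrix (Fin n) (Fin s) ℝ)
          ∈ transportPolytope p q := by
        refine ⟨fun i j => ?_, fun i => ?_, fun j => ?_⟩
        · have := hT1.1 i j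
          have := h2 i j
          linarith
        · simp only [Finset.sum_add_distrib, ← Finset.mul_sum, hT1.2.1, hT2.2.1]; ring
        · simp only [Finset.sum_add_distrib, ← Finset.mul_sum, hT1.2.2, hT2.2.2, Pi.add_apply,
            Pi.neg_apply]; ring
      have ha := hmin _ hmid
      have hb : fc γ M (fun i j => (1/2) * T1 i j + (1/2) * R (-v) i j) ≤
          (1/2) * fc γ M T1 + (1/2) * fc γ M (R (-v)) := by
        simp only [fc, Finset.mul_sum, ← Finset.sum_add_distrib]
        exact Finset.sum_le_sum fun i _ => Finset.sum_le_sum fun j _ =>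
          ec_convex hγ _ (hT1.1 i j) (h2 i j) (by norm_num) (by norm_num) (by norm_num)
      simp only [G, hR0]
      linarith
    rw [hW]
    have hm : G v ∈ fc γ M '' transportPolytope p (q + v) := ⟨_, hRmem v hv h1, rfl⟩
    exact ⟨csInf_le ⟨_, hlow⟩ hm, le_csInf ⟨_, hm⟩ hlow⟩
  have hev : ∀ᶠ v : Fin s → ℝ in nhds 0, (∀ i j, 0 ≤ R v i j) := by
    refine Filter.eventually_all.2 fun i => Filter.eventually_all.2 fun j => ?_
    have hc : ContinuousAt (fun v : Fin s → ℝ => R v i j) 0 := by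
      exact (continuous_const.add (continuous_const.mul (continuous_apply j))).continuousAt
    have : ∀ᶠ v in nhds (0 : Fin s → ℝ), R v i j ∈ Set.Ioi (0:ℝ) :=
      hc.eventually (Ioi_mem_nhds (by simpa [hR0] using hpos i j))
    exact this.mono fun v hv => le_of_lt hv
  have hneg : Filter.Tendsto (fun v : Fin s → ℝ => -v) (nhds 0) (nhds 0) := by
    simpa using (continuous_neg (G := Fin s → ℝ)).tendsto 0
  have hev2 := hneg.eventually hev
  have hsub : Filter.Tendsto (fun x : Fin s → ℝ => x - q)
      (nhdsWithin q {x : Fin s → ℝ | ∑ j, x j = 1}) (nhds 0) := by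
    have : Filter.Tendsto (fun x : Fin s → ℝ => x - q) (nhds q) (nhds (q - q)) :=
      (continuous_id.sub continuous_const).tendsto q
    rw [sub_self] at this
    exact this.mono_left nhdsWithin_le_nhds
  have hW0 : Wsmooth γ M p q = G 0 := by
    have := bound 0 (by simp) hev.self_of_nhds (by simpa using hev.self_of_nhds)
    simp only [add_zero, neg_zero] at this
    linarith [this.1, this.2]
  refine ⟨L, HasFDerivWithinAt.of_isLittleO ?_⟩
  rw [Asymptotics.isLittleO_iff]
  intro c hc
  have hLo := hL.isLittleO
  rw [Asymptotics.isLittleO_iff] at hLo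
  have hE := hLo hc
  have hE2 := hneg.eventually hE
  filter_upwards [hsub.eventually hev, hsub.eventually hev2, hsub.eventually hE,
    hsub.eventually hE2, self_mem_nhdsWithin] with x h1 h2 h3 h4 hx
  have hx' : ∑ j, x j = 1 := hx
  have hb := bound (x - q) (by simp [hx', hq1]) h1 h2
  rw [add_sub_cancel] at hb
  simp only [sub_zero, norm_neg, map_neg, Real.norm_eq_abs] at h3 h4
  simp only [hW0, Real.norm_eq_abs]
  rw [abs_le] at h3 h4 ⊢
  constructor <;> linarith [hb.1, hb.2, h3.1, h3.2, h4.1, h4.2]
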